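/- arXiv:2503.03086 — 5 statements merged into one kernel-verified Lean document; each statement's English description precedes it below -/
import Mathlib

section
/- Let ρ and ρ̃ be finite positive Borel measures on ℝ, and let W, W̃ : ℝ → M₂(ℂ) be Borel functions such that W(x) is positive semidefinite with trace 1 for ρ-a.e. x and W̃(x) is positive semidefinite with trace 1 for ρ̃-a.e. x. Assume ∫ e^{ε|x|} dρ(x) < ∞ for some ε > 0, assume ∫ |x|^k dρ̃(x) < ∞ for every k ∈ ℕ, and assume that all moments agree: ∫ x^k W(x) dρ(x) = ∫ x^k W̃(x) dρ̃(x) (entrywise) for every k ∈ ℕ₀. Then the matrix measures coincide: for every Borel set B ⊆ ℝ and all indices i, j ∈ {0,1}, ∫_B W(x)_{ij} dρ(x) = ∫_B W̃(x)_{ij} dρ̃(x). -/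
open MeasureTheory ComplexConjugate
open scoped ComplexOrder

lemma aux_int_pow (μ : Measure ℝ) [IsFiniteMeasure μ] (ε : ℝ) (hε : 0 < ε)
    (h : Integrable (fun x => Real.exp (ε * |x|)) μ) (k : ℕ) :
    Integrable (fun x : ℝ => |x| ^ k) μ := by
  refine (h.const_mul ((k.factorial : ℝ) / ε ^ k)).mono' (by fun_prop) (Filter.Eventually.of_forall fun x => ?_)
  have h1 := Real.pow_div_factorial_le_exp (ε * |x|) (by positivity) k
  rw [Real.norm_of_nonneg (by positivity)]
  rw [mul_pow, div_le_iff₀ (by positivity)] at h1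
  rw [div_mul_eq_mul_div, le_div_iff₀ (by positivity)]
  linarith

lemma aux_zero_mem (μ : Measure ℝ) (ε : ℝ) (hε : 0 < ε)
    (h : Integrable (fun x => Real.exp (ε * |x|)) μ) :
    Set.Ioo (-ε) ε ⊆ interior (ProbabilityTheory.integrableExpSet id μ) := by
  refine interior_maximal ?_ isOpen_Ioo
  intro t ht
  refine h.mono' (by fun_prop) (Filter.Eventually.of_forall fun x => ?_)
  rw [Real.norm_of_nonneg (by positivity)]
  refine Real.exp_le_exp.2 ?_
  calc t * id x ≤ |t * x| := le_abs_self _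
    _ = |t| * |x| := abs_mul _ _
    _ ≤ ε * |x| := by gcongr; exact (abs_lt.2 ht).le

lemma aux_lint (μ : Measure ℝ) (t : ℝ) (hm : ∀ k : ℕ, Integrable (fun x : ℝ => |x| ^ k) μ) :
    ∫⁻ x, ENNReal.ofReal (Real.cosh (t * x)) ∂μ =
      ∑' n : ℕ, ENNReal.ofReal (t ^ (2 * n) / ((2 * n).factorial : ℝ) * ∫ x, x ^ (2 * n) ∂μ) := by
  have h1 : ∀ x : ℝ, ENNReal.ofReal (Real.cosh (t * x)) =
      ∑' n : ℕ, ENNReal.ofReal (t ^ (2 * n) / ((2 * n).factorial : ℝ) * x ^ (2 * n)) := by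
    intro x
    rw [Real.cosh_eq_tsum, ENNReal.ofReal_tsum_of_nonneg]
    · congr 1; ext n; congr 1; ring
    · intro n
      have : 0 ≤ (t * x) ^ (2 * n) := by rw [pow_mul]; positivity
      positivity
    · exact (Real.hasSum_cosh _).summable
  simp_rw [h1]
  rw [lintegral_tsum (fun n => by fun_prop)]
  congr 1; ext n
  rw [← integral_const_mul, ofReal_integral_eq_lintegral_ofReal]
  · refine Integrable.const_mul ?_ _
    refine (hm (2 * n)).congr (Filter.Eventually.of_forall fun x => ?_)
    simp [pow_mul]
  · refine Filter.Eventually.of_forall fun x => ?_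
    have h1 : 0 ≤ t ^ (2 * n) := by rw [pow_mul]; positivity
    have h2 : 0 ≤ x ^ (2 * n) := by rw [pow_mul]; positivity
    simp only [Pi.zero_apply]
    positivity

lemma aux_exp (μ ν : Measure ℝ) [IsFiniteMeasure μ] [IsFiniteMeasure ν] (ε : ℝ) (hε : 0 < ε)
    (h : Integrable (fun x => Real.exp (ε * |x|)) μ)
    (hν : ∀ k : ℕ, Integrable (fun x : ℝ => |x| ^ k) ν)
    (heq : ∀ k : ℕ, ∫ x, x ^ k ∂μ = ∫ x, x ^ k ∂ν) :
    Integrable (fun x => Real.exp (ε * |x|)) ν := by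
  have hμ : Integrable (fun x => Real.cosh (ε * x)) μ := by
    refine h.mono' (by fun_prop) (Filter.Eventually.of_forall fun x => ?_)
    rw [Real.norm_of_nonneg (Real.cosh_pos _).le, ← Real.cosh_abs, abs_mul, abs_of_pos hε]
    rw [Real.cosh_eq]
    have : Real.exp (-(ε * |x|)) ≤ Real.exp (ε * |x|) := by
      refine Real.exp_le_exp.2 ?_
      have : 0 ≤ ε * |x| := by positivity
      linarith
    linarith
  have e : ∫⁻ x, ENNReal.ofReal (Real.cosh (ε * x)) ∂ν < ⊤ := by
    have := aux_lint μ ε (aux_int_pow μ ε hε h)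
    rw [aux_lint ν ε hν]
    simp_rw [← heq]
    rw [← this]
    exact ((hasFiniteIntegral_iff_ofReal (Filter.Eventually.of_forall fun x => (Real.cosh_pos _).le)).1 hμ.2)
  have hc : Integrable (fun x => Real.cosh (ε * x)) ν := by
    refine ⟨by fun_prop, ?_⟩
    exact (hasFiniteIntegral_iff_ofReal (Filter.Eventually.of_forall fun x => (Real.cosh_pos _).le)).2 e
  refine (hc.const_mul 2).mono' (by fun_prop) (Filter.Eventually.of_forall fun x => ?_)
  rw [Real.norm_of_nonneg (by positivity), ← Real.cosh_abs, abs_mul, abs_of_pos hε, Real.cosh_eq]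
  have := Real.exp_pos (-(ε * |x|))
  linarith

open ProbabilityTheory in
lemma aux_scalar (μ ν : Measure ℝ) [IsFiniteMeasure μ] [IsFiniteMeasure ν] (ε : ℝ) (hε : 0 < ε)
    (h : Integrable (fun x => Real.exp (ε * |x|)) μ)
    (hν : ∀ k : ℕ, Integrable (fun x : ℝ => |x| ^ k) ν)
    (heq : ∀ k : ℕ, ∫ x, x ^ k ∂μ = ∫ x, x ^ k ∂ν) : μ = ν := by
  have h' := aux_exp μ ν ε hε h hν heq
  have iμ := aux_zero_mem μ ε hε h
  have iν := aux_zero_mem ν ε hε h'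
  set S : Set ℂ := {z | z.re ∈ Set.Ioo (-ε) ε} with hS
  have aμ : AnalyticOnNhd ℂ (complexMGF id μ) S := fun z hz => analyticAt_complexMGF (iμ hz)
  have aν : AnalyticOnNhd ℂ (complexMGF id ν) S := fun z hz => analyticAt_complexMGF (iν hz)
  have hpre : IsPreconnected S :=
    ((convex_Ioo (-ε) ε).linear_preimage Complex.reLm).isPreconnected
  have h0 : (0 : ℝ) ∈ Set.Ioo (-ε) ε := ⟨by linarith, hε⟩
  have h0S : (0 : ℂ) ∈ S := by simpa [hS] using hε
  have hit : ∀ n, iteratedDeriv n (complexMGF id μ) 0 = iteratedDeriv n (complexMGF id ν) 0 := by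
    intro n
    rw [iteratedDeriv_complexMGF (iμ h0), iteratedDeriv_complexMGF (iν h0)]
    have := congrArg (fun r : ℝ => (r : ℂ)) (heq n)
    simp only [← integral_complex_ofReal] at this
    simpa using this
  have hev : complexMGF id μ =ᶠ[nhds 0] complexMGF id ν := by
    have p1 := (aμ 0 h0S).hasFPowerSeriesAt
    have p2 := (aν 0 h0S).hasFPowerSeriesAt
    simp_rw [hit] at p1
    have := (p1.sub p2)
    rw [sub_self] at this
    have := this.eventually_eq_zero
    filter_upwards [this] with z hz
    simpa [sub_eq_zero] using hz
  have hE := aμ.eqOn_of_preconnected_of_eventuallyEq aν hpre h0S hev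
  refine Measure.ext_of_charFun ?_
  ext t
  rw [← complexMGF_id_mul_I, ← complexMGF_id_mul_I]
  exact hE (by simpa [hS] using hε)

lemma aux_density (ρ : Measure ℝ) [IsFiniteMeasure ρ] (ε : ℝ) (hε : 0 < ε)
    (h : Integrable (fun x => Real.exp (ε * |x|)) ρ) (g g' : ℝ → ℝ)
    (hg : Measurable g) (hg' : Measurable g')
    (bg : ∀ᵐ x ∂ρ, |g x| ≤ 1) (bg' : ∀ᵐ x ∂ρ, |g' x| ≤ 1)
    (heq : ∀ k : ℕ, ∫ x, x ^ k * g x ∂ρ = ∫ x, x ^ k * g' x ∂ρ) (B : Set ℝ)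
    (hB : MeasurableSet B) : ∫ x in B, g x ∂ρ = ∫ x in B, g' x ∂ρ := by
  have hp := aux_int_pow ρ ε hε h
  have hp' : ∀ k : ℕ, Integrable (fun x : ℝ => x ^ k) ρ := fun k =>
    (hp k).mono' (by fun_prop) (Filter.Eventually.of_forall fun x => by simp)
  have ig : ∀ g : ℝ → ℝ, Measurable g → (∀ᵐ x ∂ρ, |g x| ≤ 1) → ∀ f : ℝ → ℝ, Integrable f ρ →
      Integrable (fun x => f x * g x) ρ := fun g hg bg f hf =>
    hf.mul_bdd (c := 1) hg.aestronglyMeasurable bg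
  have fin : ∀ g : ℝ → ℝ, Measurable g → (∀ᵐ x ∂ρ, |g x| ≤ 1) →
      IsFiniteMeasure (ρ.withDensity fun x => ENNReal.ofReal (2 + g x)) := by
    intro g hg bg
    refine isFiniteMeasure_withDensity_ofReal ?_
    refine ((integrable_const 2).add ?_).2
    simpa using ig g hg bg _ (integrable_const 1)
  have int : ∀ g : ℝ → ℝ, Measurable g → (∀ᵐ x ∂ρ, |g x| ≤ 1) → ∀ f : ℝ → ℝ, Integrable f ρ →
      Integrable f (ρ.withDensity fun x => ENNReal.ofReal (2 + g x)) := by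
    intro g hg bg f hf
    rw [integrable_withDensity_iff (by fun_prop) (by simp)]
    refine ((hf.mul_const 2).add (ig g hg bg f hf)).congr ?_
    filter_upwards [bg] with x hx
    have := neg_le_of_abs_le hx
    rw [ENNReal.toReal_ofReal (by linarith)]
    simp; ring
  have val : ∀ g : ℝ → ℝ, Measurable g → (∀ᵐ x ∂ρ, |g x| ≤ 1) → ∀ f : ℝ → ℝ, Integrable f ρ →
      ∫ x, f x ∂(ρ.withDensity fun x => ENNReal.ofReal (2 + g x)) =
        2 * ∫ x, f x ∂ρ + ∫ x, f x * g x ∂ρ := by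
    intro g hg bg f hf
    rw [integral_withDensity_eq_integral_toReal_smul (by fun_prop) (by simp),
      ← integral_const_mul, ← integral_add (hf.const_mul 2) (ig g hg bg f hf)]
    refine integral_congr_ae ?_
    filter_upwards [bg] with x hx
    have := neg_le_of_abs_le hx
    rw [ENNReal.toReal_ofReal (by linarith)]
    simp; ring
  have := fin g hg bg
  have := fin g' hg' bg'
  have key := aux_scalar _ _ ε hε (int g hg bg _ h) (fun k => int g' hg' bg' _ (hp k))
    (fun k => by rw [val g hg bg _ (hp' k), val g' hg' bg' _ (hp' k), heq k])
  have iB : Integrable (B.indicator fun _ => (1 : ℝ)) ρ := (integrable_const 1).indicator hB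
  have v1 := val g hg bg _ iB
  rw [key, val g' hg' bg' _ iB] at v1
  have e : ∀ g : ℝ → ℝ, ∫ x, B.indicator (fun _ => (1 : ℝ)) x * g x ∂ρ = ∫ x in B, g x ∂ρ := by
    intro g
    rw [← integral_indicator hB]
    congr 1; ext x; by_cases hx : x ∈ B <;> simp [hx]
  rw [e, e] at v1
  linarith

lemma aux_bound (A : Matrix (Fin 2) (Fin 2) ℂ) (h : A.PosSemidef) (ht : A.trace = 1)
    (i j : Fin 2) : ‖A i j‖ ≤ 1 := by
  have h0 := h.diag_nonneg (i := 0)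
  have h1 := h.diag_nonneg (i := 1)
  have hd := h.det_nonneg
  have hc : A 1 0 = conj (A 0 1) := (h.1.apply 1 0).symm
  rw [Matrix.det_fin_two, hc, Complex.mul_conj] at hd
  rw [Matrix.trace_fin_two] at ht
  obtain ⟨a0, b0⟩ := Complex.nonneg_iff.1 h0
  obtain ⟨a1, b1⟩ := Complex.nonneg_iff.1 h1
  have e0 : A 0 0 = ((A 0 0).re : ℂ) := Complex.ext (by simp) (by simp [← b0])
  have e1 : A 1 1 = ((A 1 1).re : ℂ) := Complex.ext (by simp) (by simp [← b1])
  have tr : (A 0 0).re + (A 1 1).re = 1 := by simpa using congrArg Complex.re ht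
  have d : Complex.normSq (A 0 1) ≤ (A 0 0).re * (A 1 1).re := by
    rw [e0, e1] at hd
    have := (Complex.nonneg_iff.1 hd).1
    simpa using this
  rw [Complex.normSq_eq_norm_sq] at d
  have n01 : ‖A 0 1‖ ≤ 1 := by nlinarith [norm_nonneg (A 0 1)]
  fin_cases i <;> fin_cases j
  · change ‖A 0 0‖ ≤ 1
    rw [e0, Complex.norm_of_nonneg a0]; linarith
  · exact n01
  · change ‖A 1 0‖ ≤ 1
    rw [hc, RCLike.norm_conj]; exact n01
  · change ‖A 1 1‖ ≤ 1
    rw [e1, Complex.norm_of_nonneg a1]; linarith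

/-- **Determinacy of matrix measures with exponentially decaying tails.**
A `2×2` matrix measure, encoded as a positive-semidefinite trace-one density `W` against a
finite positive Borel measure `ρ` on `ℝ`, with `∫ e^{ε|x|} dρ < ∞` for some `ε > 0`, is
uniquely determined among matrix measures with finite moments by its moment sequence. -/
theorem matrix_measure_determinate_of_exp_tails
    (ρ ρ' : Measure ℝ) [IsFiniteMeasure ρ] [IsFiniteMeasure ρ']
    (W W' : ℝ → Matrix (Fin 2) (Fin 2) ℂ)
    (hWmeas : ∀ (i j : Fin 2), Measurable fun x => W x i j)
    (hW'meas : ∀ (i j : Fin 2), Measurable fun x => W' x i j)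
    (hW : ∀ᵐ x ∂ρ, (W x).PosSemidef ∧ (W x).trace = 1)
    (hW' : ∀ᵐ x ∂ρ', (W' x).PosSemidef ∧ (W' x).trace = 1)
    (hexp : ∃ ε > (0 : ℝ), Integrable (fun x => Real.exp (ε * |x|)) ρ)
    (hmom : ∀ k : ℕ, Integrable (fun x => |x| ^ k) ρ')
    (heq : ∀ (k : ℕ) (i j : Fin 2),
      ∫ x, (x : ℂ) ^ k * W x i j ∂ρ = ∫ x, (x : ℂ) ^ k * W' x i j ∂ρ') :
    ∀ B : Set ℝ, MeasurableSet B → ∀ i j : Fin 2,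
      ∫ x in B, W x i j ∂ρ = ∫ x in B, W' x i j ∂ρ' := by
  obtain ⟨ε, hε, h⟩ := hexp
  have hp := aux_int_pow ρ ε hε h
  have ig : ∀ (μ : Measure ℝ) (V : ℝ → Matrix (Fin 2) (Fin 2) ℂ),
      (∀ (i j : Fin 2), Measurable fun x => V x i j) →
      (∀ᵐ x ∂μ, (V x).PosSemidef ∧ (V x).trace = 1) →
      (∀ k : ℕ, Integrable (fun x => |x| ^ k) μ) → ∀ (k : ℕ) (i j : Fin 2),
      Integrable (fun x : ℝ => (x : ℂ) ^ k * V x i j) μ := by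
    intro μ V hV hb hk k i j
    refine Integrable.mul_bdd (c := 1) ?_ (hV i j).aestronglyMeasurable ?_
    · exact (hk k).mono' (by fun_prop) (Filter.Eventually.of_forall fun x => by simp)
    · filter_upwards [hb] with x hx
      exact aux_bound _ hx.1 hx.2 i j
  have tr : ∀ (μ : Measure ℝ) (V : ℝ → Matrix (Fin 2) (Fin 2) ℂ),
      (∀ (i j : Fin 2), Measurable fun x => V x i j) →
      (∀ᵐ x ∂μ, (V x).PosSemidef ∧ (V x).trace = 1) →
      (∀ k : ℕ, Integrable (fun x => |x| ^ k) μ) → ∀ (k : ℕ),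
      ((∫ x : ℝ, x ^ k ∂μ : ℝ) : ℂ) =
        ∫ x : ℝ, (x : ℂ) ^ k * V x 0 0 ∂μ + ∫ x : ℝ, (x : ℂ) ^ k * V x 1 1 ∂μ := by
    intro μ V hV hb hk k
    rw [← integral_add (ig μ V hV hb hk k 0 0) (ig μ V hV hb hk k 1 1), ← integral_complex_ofReal]
    refine integral_congr_ae ?_
    filter_upwards [hb] with x hx
    rw [← mul_add, ← Matrix.trace_fin_two, hx.2]
    simp
  have hρ : ρ = ρ' := by
    refine aux_scalar ρ ρ' ε hε h hmom fun k => ?_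
    have := tr ρ W hWmeas hW hp k
    rw [heq, heq, ← tr ρ' W' hW'meas hW' hmom k] at this
    exact_mod_cast this
  subst hρ
  intro B hB i j
  have iW := ig ρ W hWmeas hW hp
  have iW' := ig ρ W' hW'meas hW' hp
  have i0 : Integrable (fun x => W x i j) ρ := by simpa using iW 0 i j
  have i0' : Integrable (fun x => W' x i j) ρ := by simpa using iW' 0 i j
  have hre : ∀ (k : ℕ) (x : ℝ) (z : ℂ), ((x : ℂ) ^ k * z).re = x ^ k * z.re := by
    intro k x z
    rw [← Complex.ofReal_pow, Complex.re_ofReal_mul]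
  have him : ∀ (k : ℕ) (x : ℝ) (z : ℂ), ((x : ℂ) ^ k * z).im = x ^ k * z.im := by
    intro k x z
    rw [← Complex.ofReal_pow, Complex.im_ofReal_mul]
  have R : ∀ (μ : Measure ℝ) (f : ℝ → ℂ), Integrable f μ →
      (∫ x, f x ∂μ).re = ∫ x, (f x).re ∂μ := fun μ f hf => (integral_re hf).symm
  have I : ∀ (μ : Measure ℝ) (f : ℝ → ℂ), Integrable f μ →
      (∫ x, f x ∂μ).im = ∫ x, (f x).im ∂μ := fun μ f hf => (integral_im hf).symm
  apply Complex.ext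
  · rw [R _ _ i0.restrict, R _ _ i0'.restrict]
    refine aux_density ρ ε hε h _ _ (Complex.measurable_re.comp (hWmeas i j))
      (Complex.measurable_re.comp (hW'meas i j)) ?_ ?_ ?_ B hB
    · filter_upwards [hW] with x hx
      exact (Complex.abs_re_le_norm _).trans (aux_bound _ hx.1 hx.2 i j)
    · filter_upwards [hW'] with x hx
      exact (Complex.abs_re_le_norm _).trans (aux_bound _ hx.1 hx.2 i j)
    · intro k
      have := congrArg Complex.re (heq k i j)
      rw [R _ _ (iW k i j), R _ _ (iW' k i j)] at this
      simpa only [hre, Function.comp_apply] using this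
  · rw [I _ _ i0.restrict, I _ _ i0'.restrict]
    refine aux_density ρ ε hε h _ _ (Complex.measurable_im.comp (hWmeas i j))
      (Complex.measurable_im.comp (hW'meas i j)) ?_ ?_ ?_ B hB
    · filter_upwards [hW] with x hx
      exact (Complex.abs_im_le_norm _).trans (aux_bound _ hx.1 hx.2 i j)
    · filter_upwards [hW'] with x hx
      exact (Complex.abs_im_le_norm _).trans (aux_bound _ hx.1 hx.2 i j)
    · intro k
      have := congrArg Complex.im (heq k i j)
      rw [I _ _ (iW k i j), I _ _ (iW' k i j)] at this
      simpa only [him, Function.comp_apply] using this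
end

section
/- Let μ be a finite positive Borel measure on ℝ and f ∈ L¹(μ) complex-valued, and define the Stieltjes transform m(z) = ∫ f(x)/(x − z) dμ(x) for z ∈ ℂ \ ℝ. Then: (i) m(z) = −m(−z) for all z ∈ ℂ \ ℝ if and only if the complex measure f dμ is even, i.e. ∫_{−B} f dμ = ∫_B f dμ for every Borel set B ⊆ ℝ; and (ii) m(z) = m(−z) for all z ∈ ℂ \ ℝ if and only if f dμ is odd, i.e. ∫_{−B} f dμ = −∫_B f dμ for every Borel set B ⊆ ℝ. -/
open MeasureTheory

namespace StieltjesParity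

open Filter Topology

/-- Symmetry of the functional against a test function. -/
def P (μ : Measure ℝ) (f : ℝ → ℂ) (c : ℂ) (φ : ℝ → ℂ) : Prop :=
  ∫ x, f x * φ x ∂μ = c * ∫ x, f x * φ (-x) ∂μ

lemma int_mul {μ : Measure ℝ} {f : ℝ → ℂ} (hf : Integrable f μ) {φ : ℝ → ℂ}
    (hφ : Measurable φ) {C : ℝ} (hC : ∀ x, ‖φ x‖ ≤ C) : Integrable (fun x => f x * φ x) μ :=
  hf.mul_bdd (c := C) hφ.aestronglyMeasurable (ae_of_all _ hC)

lemma P_lim {μ : Measure ℝ} {f : ℝ → ℂ} (hf : Integrable f μ) {c : ℂ} {φ : ℕ → ℝ → ℂ}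
    {ψ : ℝ → ℂ} (hφ : ∀ n, Measurable (φ n)) {C : ℝ} (hC : ∀ n x, ‖φ n x‖ ≤ C)
    (hl : ∀ x, Tendsto (fun n => φ n x) atTop (𝓝 (ψ x))) (hP : ∀ n, P μ f c (φ n)) :
    P μ f c ψ := by
  have key : ∀ σ : ℝ → ℝ, Measurable σ →
      Tendsto (fun n => ∫ x, f x * φ n (σ x) ∂μ) atTop (𝓝 (∫ x, f x * ψ (σ x) ∂μ)) := by
    intro σ hσ
    apply tendsto_integral_of_dominated_convergence (fun x => ‖f x‖ * C)
    · intro n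
      exact hf.aestronglyMeasurable.mul ((hφ n).comp hσ).aestronglyMeasurable
    · exact hf.norm.mul_const C
    · intro n
      refine ae_of_all _ fun x => ?_
      rw [norm_mul]
      gcongr
      exact hC n _
    · exact ae_of_all _ fun x => (hl (σ x)).const_mul _
  have h1 := key (fun x => x) measurable_id
  have h2 := (key (fun x => -x) measurable_neg).const_mul c
  refine tendsto_nhds_unique h1 (h2.congr fun n => (hP n).symm)

lemma P_add {μ : Measure ℝ} {f : ℝ → ℂ} (hf : Integrable f μ) {c : ℂ} {φ ψ : ℝ → ℂ}
    (hφ : Measurable φ) {C : ℝ} (hC : ∀ x, ‖φ x‖ ≤ C)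
    (hψ : Measurable ψ) {D : ℝ} (hD : ∀ x, ‖ψ x‖ ≤ D)
    (h1 : P μ f c φ) (h2 : P μ f c ψ) : P μ f c (fun x => φ x + ψ x) := by
  unfold P at *
  simp only [mul_add]
  rw [integral_add (int_mul hf hφ hC) (int_mul hf hψ hD),
    integral_add (int_mul hf (φ := fun x => φ (-x)) (hφ.comp measurable_neg) fun x => hC (-x))
      (int_mul hf (φ := fun x => ψ (-x)) (hψ.comp measurable_neg) fun x => hD (-x)), h1, h2, mul_add]

lemma P_smul {μ : Measure ℝ} {f : ℝ → ℂ} {c : ℂ} {φ : ℝ → ℂ} (d : ℂ)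
    (h1 : P μ f c φ) : P μ f c (fun x => d * φ x) := by
  unfold P at *
  simp only [mul_left_comm _ d]
  rw [integral_const_mul, integral_const_mul, h1, mul_left_comm]

lemma P_ind {μ : Measure ℝ} {f : ℝ → ℂ} {c : ℂ} {B : Set ℝ} (hB : MeasurableSet B) :
    P μ f c (B.indicator fun _ => 1) ↔ ∫ x in B, f x ∂μ = c * ∫ x in -B, f x ∂μ := by
  unfold P
  rw [← integral_indicator hB, ← integral_indicator hB.neg]
  have h1 : (fun x => f x * B.indicator (fun _ => (1:ℂ)) x) = B.indicator f := by
    ext x; by_cases h : x ∈ B <;> simp [h]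
  have h2 : (fun x => f x * B.indicator (fun _ => (1:ℂ)) (-x)) = (-B).indicator f := by
    ext x; by_cases h : -x ∈ B <;> simp [h]
  rw [h1, h2]

lemma P_simple {μ : Measure ℝ} {f : ℝ → ℂ} (hf : Integrable f μ) {c : ℂ}
    (h : ∀ B : Set ℝ, MeasurableSet B → P μ f c (B.indicator fun _ => 1))
    (φ : SimpleFunc ℝ ℂ) : P μ f c φ := by
  induction φ using SimpleFunc.induction with
  | @const d s hs =>
    convert P_smul d (h s hs) using 1
    ext x; by_cases hx : x ∈ s <;> simp [hx]
  | @add φ ψ _ h1 h2 =>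
    obtain ⟨C, hC⟩ := φ.exists_forall_norm_le
    obtain ⟨D, hD⟩ := ψ.exists_forall_norm_le
    exact P_add hf φ.measurable hC ψ.measurable hD h1 h2

lemma P_bdd {μ : Measure ℝ} {f : ℝ → ℂ} (hf : Integrable f μ) {c : ℂ}
    (h : ∀ B : Set ℝ, MeasurableSet B → P μ f c (B.indicator fun _ => 1))
    {φ : ℝ → ℂ} (hφ : Measurable φ) {C : ℝ} (hC : ∀ x, ‖φ x‖ ≤ C) : P μ f c φ := by
  have hs := hφ.stronglyMeasurable
  have h0 : 0 ≤ C := (norm_nonneg _).trans (hC 0)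
  refine P_lim hf (φ := fun n => hs.approxBounded C n) (fun n => SimpleFunc.measurable _)
    (C := C) (fun n x => hs.norm_approxBounded_le h0 n x)
    (fun x => hs.tendsto_approxBounded_of_norm_le (hC x)) (fun n => P_simple hf h _)

lemma norm_res_le (x : ℝ) {z : ℂ} (hz : z.im ≠ 0) : ‖((x:ℂ) - z)⁻¹‖ ≤ |z.im|⁻¹ := by
  rw [norm_inv]
  have h := Complex.abs_im_le_norm ((x:ℂ) - z)
  simp at h
  exact inv_anti₀ (abs_pos.2 hz) h

lemma meas_res (z : ℂ) : Measurable fun x : ℝ => ((x:ℂ) - z)⁻¹ := by fun_prop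

/-- Poisson kernel. -/
noncomputable def K (y x t : ℝ) : ℝ := y / ((x - t) ^ 2 + y ^ 2)

lemma K_eq {y : ℝ} (hy : 0 < y) (x t : ℝ) : ((K y x t : ℝ) : ℂ) =
    (2 * Complex.I)⁻¹ * ((x:ℂ) - (t + y * Complex.I))⁻¹ +
    (-(2 * Complex.I)⁻¹) * ((x:ℂ) - (t - y * Complex.I))⁻¹ := by
  have h1 : (x:ℂ) - (t + y * Complex.I) ≠ 0 := by
    intro h; have := congrArg Complex.im h; simp at this; exact hy.ne' this
  have h2 : (x:ℂ) - (t - y * Complex.I) ≠ 0 := by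
    intro h; have := congrArg Complex.im h; simp at this; exact hy.ne' this
  have h3 : ((x:ℂ) - (t + y * Complex.I)) * ((x:ℂ) - (t - y * Complex.I)) =
      (x - t) ^ 2 + y ^ 2 := by
    linear_combination (-(y:ℂ)^2) * Complex.I_sq
  unfold K
  push_cast
  rw [← h3]
  field_simp
  ring

lemma K_nonneg {y : ℝ} (hy : 0 < y) (x t : ℝ) : 0 ≤ K y x t := by unfold K; positivity

lemma K_le {y : ℝ} (hy : 0 < y) (x t : ℝ) : K y x t ≤ y⁻¹ := by
  unfold K
  rw [div_le_iff₀ (by positivity)]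
  have : y⁻¹ * ((x - t) ^ 2 + y ^ 2) = y⁻¹ * (x-t)^2 + y := by field_simp
  rw [this]
  have : 0 ≤ y⁻¹ * (x-t)^2 := by positivity
  linarith

lemma K_cont {y : ℝ} (hy : 0 < y) : Continuous fun p : ℝ × ℝ => K y p.1 p.2 := by
  unfold K
  refine Continuous.div (by fun_prop) (by fun_prop) fun p => by positivity

lemma K_int {y : ℝ} (hy : 0 < y) (x a b : ℝ) : ∫ t in a..b, K y x t =
    Real.arctan ((b - x) / y) - Real.arctan ((a - x) / y) := by
  refine intervalIntegral.integral_eq_sub_of_hasDerivAt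
    (f := fun t => Real.arctan ((t - x) / y)) (fun t _ => ?_) ?_
  · have h := (((hasDerivAt_id t).sub_const x).div_const y).arctan
    have e : K y x t = 1 / (1 + ((id t - x) / y) ^ 2) * (1 / y) := by
      unfold K
      simp only [id]
      field_simp
      ring
    rw [e]
    exact h
  · exact ((K_cont hy).comp (by fun_prop : Continuous fun t : ℝ => (x, t))).intervalIntegrable _ _

lemma P_K {μ : Measure ℝ} {f : ℝ → ℂ} (hf : Integrable f μ) {c : ℂ}
    (h : ∀ z : ℂ, z.im ≠ 0 → P μ f c (fun x => ((x:ℂ) - z)⁻¹)) {y : ℝ} (hy : 0 < y) (t : ℝ) :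
    P μ f c (fun x => ((K y x t : ℝ) : ℂ)) := by
  simp only [K_eq hy]
  have h1 : ((t:ℂ) + y * Complex.I).im ≠ 0 := by simp [hy.ne']
  have h2 : ((t:ℂ) - y * Complex.I).im ≠ 0 := by simp [hy.ne']
  have b : ∀ (d z : ℂ), z.im ≠ 0 → ∀ x : ℝ, ‖d * ((x:ℂ) - z)⁻¹‖ ≤ ‖d‖ * |z.im|⁻¹ := by
    intro d z hz x
    rw [norm_mul]
    gcongr
    exact norm_res_le x hz
  exact P_add hf ((meas_res _).const_mul _) (b _ _ h1) ((meas_res _).const_mul _) (b _ _ h2)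
    (P_smul _ (h _ h1)) (P_smul _ (h _ h2))

lemma P_arctan {μ : Measure ℝ} [IsFiniteMeasure μ] {f : ℝ → ℂ} (hf : Integrable f μ) {c : ℂ}
    (h : ∀ z : ℂ, z.im ≠ 0 → P μ f c (fun x => ((x:ℂ) - z)⁻¹)) {y : ℝ} (hy : 0 < y)
    {a b : ℝ} (hab : a ≤ b) : P μ f c (fun x =>
      ((Real.arctan ((b - x) / y) - Real.arctan ((a - x) / y) : ℝ) : ℂ)) := by
  have key : ∀ σ : ℝ → ℝ, Continuous σ →
      ∫ x, f x * ((Real.arctan ((b - σ x) / y) - Real.arctan ((a - σ x) / y) : ℝ) : ℂ) ∂μ =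
      ∫ t in Set.Ioc a b, ∫ x, f x * ((K y (σ x) t : ℝ) : ℂ) ∂μ := by
    intro σ hσ
    rw [← integral_integral_swap]
    · congr 1
      ext x
      rw [← K_int hy, intervalIntegral.integral_of_le hab, integral_const_mul]
      congr 1
      exact integral_ofReal.symm
    · have hi : Integrable (fun p : ℝ × ℝ => f p.1) (μ.prod (volume.restrict (Set.Ioc a b))) :=
        hf.comp_fst _
      refine hi.mul_bdd (c := y⁻¹) ?_ (ae_of_all _ fun p => ?_)
      · have hc : Continuous fun p : ℝ × ℝ => ((K y (σ p.1) p.2 : ℝ) : ℂ) :=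
          Complex.continuous_ofReal.comp ((K_cont hy).comp
            (by fun_prop : Continuous fun p : ℝ × ℝ => (σ p.1, p.2)))
        exact hc.aestronglyMeasurable
      · rw [Complex.norm_real, Real.norm_of_nonneg (K_nonneg hy _ _)]
        exact K_le hy _ _
  unfold P
  rw [key (fun x => x) continuous_id, key (fun x => -x) continuous_neg, ← integral_const_mul]
  congr 1
  ext t
  exact P_K hf h hy t

lemma arctan_bd (u v : ℝ) : ‖((Real.arctan u - Real.arctan v : ℝ) : ℂ)‖ ≤ Real.pi := by
  rw [Complex.norm_real, Real.norm_eq_abs, abs_le]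
  have := Real.arctan_lt_pi_div_two u
  have := Real.arctan_lt_pi_div_two v
  have := Real.neg_pi_div_two_lt_arctan u
  have := Real.neg_pi_div_two_lt_arctan v
  constructor <;> linarith

lemma at_top {u : ℕ → ℝ} (h : Tendsto u atTop atTop) :
    Tendsto (fun n => Real.arctan (u n)) atTop (𝓝 (Real.pi / 2)) :=
  (Real.tendsto_arctan_atTop.mono_right nhdsWithin_le_nhds).comp h

lemma at_bot {u : ℕ → ℝ} (h : Tendsto u atTop atBot) :
    Tendsto (fun n => Real.arctan (u n)) atTop (𝓝 (-(Real.pi / 2))) :=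
  (Real.tendsto_arctan_atBot.mono_right nhdsWithin_le_nhds).comp h

lemma natT : Tendsto (fun n : ℕ => (n:ℝ) + 1) atTop atTop :=
  tendsto_atTop_add_const_right _ _ tendsto_natCast_atTop_atTop

lemma lim_pos (x : ℝ) : Tendsto (fun n : ℕ => ((n:ℝ) + 1 - x) / (((n:ℝ) + 1)^2)⁻¹) atTop atTop := by
  simp only [div_inv_eq_mul]
  exact (tendsto_atTop_add_const_right _ (-x) natT).atTop_mul_atTop₀
    ((tendsto_pow_atTop two_ne_zero).comp natT)

lemma lim_neg (x : ℝ) :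
    Tendsto (fun n : ℕ => (-((n:ℝ) + 1) - x) / (((n:ℝ) + 1)^2)⁻¹) atTop atBot := by
  have h := tendsto_neg_atTop_atBot.comp (lim_pos (-x))
  refine h.congr fun n => ?_
  simp only [Function.comp]
  ring

lemma P_one {μ : Measure ℝ} [IsFiniteMeasure μ] {f : ℝ → ℂ} (hf : Integrable f μ) {c : ℂ}
    (h : ∀ z : ℂ, z.im ≠ 0 → P μ f c (fun x => ((x:ℂ) - z)⁻¹)) :
    P μ f c (fun _ => 1) := by
  have : P μ f c (fun _ => (Real.pi : ℂ)) := by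
    refine P_lim hf (φ := fun n x => ((Real.arctan (((n:ℝ) + 1 - x) / (((n:ℝ) + 1)^2)⁻¹) -
      Real.arctan ((-((n:ℝ) + 1) - x) / (((n:ℝ) + 1)^2)⁻¹) : ℝ) : ℂ)) (C := Real.pi)
      (fun n => by fun_prop) (fun n x => arctan_bd _ _) (fun x => ?_)
      (fun n => P_arctan hf h (by positivity) (by linarith [n.cast_nonneg (α := ℝ)]))
    refine (Complex.continuous_ofReal.tendsto _).comp ?_
    convert (at_top (lim_pos x)).sub (at_bot (lim_neg x)) using 2
    ring
  convert P_smul (Real.pi : ℂ)⁻¹ this using 1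
  ext x
  simp [Real.pi_ne_zero]

lemma P_Iic {μ : Measure ℝ} [IsFiniteMeasure μ] {f : ℝ → ℂ} (hf : Integrable f μ) {c : ℂ}
    (h : ∀ z : ℂ, z.im ≠ 0 → P μ f c (fun x => ((x:ℂ) - z)⁻¹)) (b : ℝ) :
    P μ f c ((Set.Iic b).indicator fun _ => 1) := by
  have : P μ f c (fun x => (Real.pi : ℂ) * (Set.Iic b).indicator (fun _ => 1) x) := by
    refine P_lim hf (φ := fun n x => ((Real.arctan ((b + ((n:ℝ) + 1)⁻¹ - x) / (((n:ℝ) + 1)^2)⁻¹) -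
      Real.arctan ((b - |b| + -((n:ℝ) + 1) - x) / (((n:ℝ) + 1)^2)⁻¹) : ℝ) : ℂ)) (C := Real.pi)
      (fun n => by fun_prop) (fun n x => arctan_bd _ _) (fun x => ?_)
      (fun n => P_arctan hf h (by positivity) ?_)
    · have hB : Tendsto (fun n : ℕ => (b - |b| + -((n:ℝ) + 1) - x) / (((n:ℝ) + 1)^2)⁻¹)
          atTop atBot := by
        refine (lim_neg (x - (b - |b|))).congr fun n => ?_
        ring
      by_cases hx : x ≤ b
      · have hA : Tendsto (fun n : ℕ => (b + ((n:ℝ) + 1)⁻¹ - x) / (((n:ℝ) + 1)^2)⁻¹)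
            atTop atTop := by
          refine tendsto_atTop_mono (fun n => ?_) natT
          have : (b + ((n:ℝ) + 1)⁻¹ - x) / (((n:ℝ) + 1)^2)⁻¹ =
            (b - x) * ((n:ℝ) + 1)^2 + ((n:ℝ) + 1) := by field_simp; ring
          rw [this]
          have : 0 ≤ (b - x) * ((n:ℝ) + 1)^2 := mul_nonneg (by linarith) (by positivity)
          linarith
        have hl := (at_top hA).sub (at_bot hB)
        have e : (Real.pi : ℂ) * (Set.Iic b).indicator (fun _ => 1) x =
            ((Real.pi / 2 - -(Real.pi / 2) : ℝ) : ℂ) := by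
          simp [hx]
        rw [e]
        exact (Complex.continuous_ofReal.tendsto _).comp hl
      · have hA : Tendsto (fun n : ℕ => (b + ((n:ℝ) + 1)⁻¹ - x) / (((n:ℝ) + 1)^2)⁻¹)
            atTop atBot := by
          have h1 : Tendsto (fun n : ℕ => b + ((n:ℝ) + 1)⁻¹ - x) atTop (𝓝 (b + 0 - x)) :=
            (((tendsto_inv_atTop_zero).comp natT).const_add b).sub_const x
          simp only [div_inv_eq_mul]
          exact h1.neg_mul_atTop (by linarith) ((tendsto_pow_atTop two_ne_zero).comp natT)
        have hl := (at_bot hA).sub (at_bot hB)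
        have e : (Real.pi : ℂ) * (Set.Iic b).indicator (fun _ => 1) x =
            ((-(Real.pi / 2) - -(Real.pi / 2) : ℝ) : ℂ) := by
          simp [hx]
        rw [e]
        exact (Complex.continuous_ofReal.tendsto _).comp hl
    · have : 0 < ((n:ℝ) + 1)⁻¹ := by positivity
      have := n.cast_nonneg (α := ℝ)
      have := abs_nonneg b
      linarith
  convert P_smul (Real.pi : ℂ)⁻¹ this using 1
  ext x
  simp [Real.pi_ne_zero]

lemma P_all {μ : Measure ℝ} [IsFiniteMeasure μ] {f : ℝ → ℂ} (hf : Integrable f μ) {c : ℂ}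
    (h : ∀ z : ℂ, z.im ≠ 0 → P μ f c (fun x => ((x:ℂ) - z)⁻¹)) (B : Set ℝ)
    (hB : MeasurableSet B) : ∫ x in B, f x ∂μ = c * ∫ x in -B, f x ∂μ := by
  have h1 : ∫ x, f x ∂μ = c * ∫ x, f x ∂μ := by simpa [P] using P_one hf h
  induction B, hB using MeasurableSpace.induction_on_inter
    (borel_eq_generateFrom_Iic ℝ ▸ (BorelSpace.measurable_eq (α := ℝ))) isPiSystem_Iic with
  | empty => simp
  | basic t ht =>
    obtain ⟨b, rfl⟩ := ht
    exact (P_ind measurableSet_Iic).1 (P_Iic hf h b)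
  | compl t ht ih =>
    have e1 := integral_add_compl ht hf
    have e2 := integral_add_compl ht.neg hf
    have e3 : -tᶜ = (-t)ᶜ := by ext; simp
    rw [e3]
    linear_combination e1 - c * e2 - ih + h1
  | iUnion g hd hm ih =>
    have e3 : -(⋃ i, g i) = ⋃ i, -(g i) := by ext; simp
    have s1 := hasSum_integral_iUnion hm hd hf.integrableOn
    have s2 := (hasSum_integral_iUnion (fun i => (hm i).neg)
      (fun i j hij => (hd hij).preimage Neg.neg) (f := f) hf.integrableOn).mul_left c
    rw [e3]
    simp only [ih] at s1
    exact s1.unique s2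

lemma main {μ : Measure ℝ} [IsFiniteMeasure μ] {f : ℝ → ℂ} (hf : Integrable f μ) (c : ℂ) :
    (∀ z : ℂ, z.im ≠ 0 → P μ f c (fun x => ((x:ℂ) - z)⁻¹)) ↔
    ∀ B : Set ℝ, MeasurableSet B → ∫ x in B, f x ∂μ = c * ∫ x in -B, f x ∂μ :=
  ⟨fun h => P_all hf h, fun h _ hz => P_bdd hf (fun B hB => (P_ind hB).2 (h B hB)) (meas_res _)
    fun x => norm_res_le x hz⟩

lemma flip (μ : Measure ℝ) (f : ℝ → ℂ) (z : ℂ) :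
    ∫ x, f x * (((-x : ℝ) : ℂ) - z)⁻¹ ∂μ = -∫ x, f x / ((x : ℂ) - (-z)) ∂μ := by
  rw [← integral_neg]
  congr 1
  ext x
  rw [div_eq_mul_inv, ← mul_neg, ← inv_neg]
  congr 2
  push_cast
  ring

end StieltjesParity

/-- **Parity symmetries of Stieltjes transforms of complex measures.**
For a complex measure `f dμ` on `ℝ` with Stieltjes transform
`m(z) = ∫ f(x)/(x − z) dμ(x)` (`z ∈ ℂ \ ℝ`):
(i) `m(z) = −m(−z)` for all `z` iff `f dμ` is even, and
(ii) `m(z) = m(−z)` for all `z` iff `f dμ` is odd. -/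
theorem stieltjes_transform_parity
    (μ : Measure ℝ) [IsFiniteMeasure μ] (f : ℝ → ℂ) (hf : Integrable f μ) :
    ((∀ z : ℂ, z.im ≠ 0 →
        (∫ x, f x / ((x : ℂ) - z) ∂μ) = -∫ x, f x / ((x : ℂ) - (-z)) ∂μ) ↔
      (∀ B : Set ℝ, MeasurableSet B → ∫ x in -B, f x ∂μ = ∫ x in B, f x ∂μ)) ∧
    ((∀ z : ℂ, z.im ≠ 0 →
        (∫ x, f x / ((x : ℂ) - z) ∂μ) = ∫ x, f x / ((x : ℂ) - (-z)) ∂μ) ↔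
      (∀ B : Set ℝ, MeasurableSet B → ∫ x in -B, f x ∂μ = -∫ x in B, f x ∂μ)) := by
  have h1 := StieltjesParity.main hf 1
  have h2 := StieltjesParity.main hf (-1)
  simp only [StieltjesParity.P, StieltjesParity.flip, one_mul, neg_mul,
    neg_neg] at h1 h2
  simp only [← div_eq_mul_inv] at h1 h2
  refine ⟨h1.trans ?_, h2.trans ?_⟩
  · exact forall₂_congr fun B _ => eq_comm
  · exact forall₂_congr fun B _ => ⟨fun h => by rw [h, neg_neg], fun h => by rw [h, neg_neg]⟩
end

section
/- Let μ be a finite positive Borel measure on ℝ and f ∈ L¹(μ) complex-valued, and define the Stieltjes transform m(z) = ∫ f(x)/(x − z) dμ(x) for z ∈ ℂ \ ℝ. Then conj(m(z)) = m(conj(z)) for all z ∈ ℂ \ ℝ if and only if the complex measure f dμ is real, i.e. ∫_B f dμ ∈ ℝ for every Borel set B ⊆ ℝ (equivalently, f(x) ∈ ℝ for μ-a.e. x). -/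
open MeasureTheory ComplexConjugate

open Filter Topology in
theorem aux_integrable (μ : Measure ℝ) (f : ℝ → ℂ) (hf : Integrable f μ) (w : ℂ) (hw : w.im ≠ 0) :
    Integrable (fun x : ℝ => f x / ((x : ℂ) - w)) μ := by
  have hne : ∀ x : ℝ, (x : ℂ) - w ≠ 0 := by
    intro x h
    apply hw
    have := congrArg Complex.im h
    simpa using this
  have hc : Continuous (fun x : ℝ => ((x : ℂ) - w)⁻¹) :=
    Continuous.inv₀ (by fun_prop) hne
  have := hf.mul_bdd (c := |w.im|⁻¹) hc.aestronglyMeasurable (μ := μ) (ae_of_all _ (fun x => by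
    rw [norm_inv]
    apply inv_anti₀ (abs_pos.mpr hw)
    have := Complex.abs_im_le_norm ((x : ℂ) - w)
    simpa using this))
  simpa [div_eq_mul_inv] using this

theorem aux_kernel (μ : Measure ℝ) (f : ℝ → ℂ) (hf : Integrable f μ)
    (h : ∀ z : ℂ, z.im ≠ 0 →
        conj (∫ x, f x / ((x : ℂ) - z) ∂μ) = ∫ x, f x / ((x : ℂ) - conj z) ∂μ)
    (t ε : ℝ) (hε : 0 < ε) :
    ∫ x, (f x).im * (1 / (1 + ((t - x) / ε) ^ 2) * (1 / ε)) ∂μ = 0 := by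
  have hz := h (conj (⟨t, ε⟩ : ℂ)) (by simpa using hε.ne')
  rw [← integral_conj, Complex.conj_conj] at hz
  have hi1 := aux_integrable μ f hf ⟨t, ε⟩ hε.ne'
  have hi2 := aux_integrable μ (fun x => conj (f x)) (by
    exact (Complex.conjCLE.toContinuousLinearMap.integrable_comp hf)) ⟨t, ε⟩ hε.ne'
  have e1 : (∫ x : ℝ, conj (f x / ((x : ℂ) - conj (⟨t, ε⟩ : ℂ))) ∂μ)
      = ∫ x : ℝ, conj (f x) / ((x : ℂ) - (⟨t, ε⟩ : ℂ)) ∂μ := by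
    congr 1; ext x; simp
  rw [e1] at hz
  have h0 := integral_sub hi1 hi2
  rw [hz, sub_self] at h0
  have h1 := congrArg Complex.re h0
  have h2 := integral_re (𝕜 := ℂ) (hi1.sub hi2)
  simp only [Pi.sub_apply] at h2
  have h1 := h2.trans h1
  have e2 : ∀ x : ℝ, RCLike.re (f x / ((x : ℂ) - (⟨t, ε⟩ : ℂ)) - conj (f x) / ((x : ℂ) - (⟨t, ε⟩ : ℂ)))
      = (-2) * ((f x).im * (1 / (1 + ((t - x) / ε) ^ 2) * (1 / ε))) := by
    intro x
    have hp : (x - t) ^ 2 + ε ^ 2 ≠ 0 := by positivity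
    have hp' : 1 + ((t - x) / ε) ^ 2 ≠ 0 := by positivity
    have hq : 1 + ((t - x) / ε) ^ 2 = ((x - t) ^ 2 + ε ^ 2) / ε ^ 2 := by field_simp; ring
    rw [hq]
    simp only [RCLike.re_eq_complex_re, Complex.sub_re, Complex.div_re, Complex.normSq_apply,
      Complex.conj_re, Complex.conj_im, Complex.sub_im, Complex.ofReal_re, Complex.ofReal_im]
    have hn : (x - t) * (x - t) + (0 - ε) * (0 - ε) = (x - t) ^ 2 + ε ^ 2 := by ring
    rw [hn]
    field_simp
    ring
  simp only [e2] at h1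
  rw [integral_const_mul] at h1
  simpa using h1

open Filter Topology in
theorem aux_zero (μ : Measure ℝ) (g : ℝ → ℝ) (hg : Integrable g μ)
    (h : ∀ t ε : ℝ, 0 < ε → ∫ x, g x * (1 / (1 + ((t - x) / ε) ^ 2) * (1 / ε)) ∂μ = 0)
    (B : Set ℝ) (hB : MeasurableSet B) : ∫ x in B, g x ∂μ = 0 := by
  have hπ : (0:ℝ) < Real.pi := Real.pi_pos
  have habs : ∀ y : ℝ, ‖Real.arctan y‖ ≤ Real.pi / 2 := fun y =>
    abs_le.mpr ⟨(Real.neg_pi_div_two_lt_arctan y).le, (Real.arctan_lt_pi_div_two y).le⟩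
  have hm : ∀ t ε : ℝ, AEStronglyMeasurable (fun x => g x * Real.arctan ((t - x) / ε)) μ :=
    fun t ε => hg.aestronglyMeasurable.mul
      (Real.continuous_arctan.comp (by fun_prop)).aestronglyMeasurable
  have hint : ∀ t ε : ℝ, Integrable (fun x => g x * Real.arctan ((t - x) / ε)) μ := fun t ε =>
    hg.mul_bdd (c := Real.pi / 2)
      (Real.continuous_arctan.comp (by fun_prop)).aestronglyMeasurable
      (ae_of_all _ fun x => habs _)
  have hconst : ∀ ε : ℝ, 0 < ε → ∀ a b : ℝ,
      ∫ x, g x * Real.arctan ((a - x) / ε) ∂μ = ∫ x, g x * Real.arctan ((b - x) / ε) ∂μ := by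
    intro ε hε
    have hd : ∀ t, HasDerivAt (fun t => ∫ x, g x * Real.arctan ((t - x) / ε) ∂μ) 0 t := by
      intro t
      have := (hasDerivAt_integral_of_dominated_loc_of_deriv_le (μ := μ)
        (F := fun t x => g x * Real.arctan ((t - x) / ε))
        (F' := fun t x => g x * (1 / (1 + ((t - x) / ε) ^ 2) * (1 / ε)))
        (x₀ := t) (s := Set.univ) (bound := fun x => |g x| * (1 / ε)) univ_mem
        (Eventually.of_forall fun s => hm s ε) (hint t ε)
        (hg.aestronglyMeasurable.mul (Continuous.aestronglyMeasurable (by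
          refine Continuous.mul (Continuous.div continuous_const (by fun_prop) ?_) continuous_const
          intro x; positivity)))
        (ae_of_all _ fun x s _ => by
          rw [norm_mul, Real.norm_eq_abs, Real.norm_eq_abs]
          gcongr
          rw [abs_of_nonneg (by positivity)]
          refine mul_le_of_le_one_left (by positivity) ?_
          rw [div_le_one (by positivity)]
          have := sq_nonneg ((s - x) / ε)
          linarith)
        (hg.abs.mul_const _)
        (ae_of_all _ fun x s _ => by
          have h1 : HasDerivAt (fun s : ℝ => (s - x) / ε) (1 / ε) s :=
            ((hasDerivAt_id s).sub_const x).div_const ε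
          exact (h1.arctan).const_mul (g x))).2
      rwa [h t ε hε] at this
    exact is_const_of_deriv_eq_zero (fun t => (hd t).differentiableAt) (fun t => (hd t).deriv)
  -- limit ε → 0
  have harc : ∀ y : ℝ, Tendsto (fun n : ℕ => Real.arctan (y / (1 / ((n:ℝ) + 1)))) atTop
      (𝓝 (Real.pi / 2 * Real.sign y)) := by
    intro y
    have hn : Tendsto (fun n : ℕ => (n:ℝ) + 1) atTop atTop :=
      tendsto_atTop_add_const_right _ _ tendsto_natCast_atTop_atTop
    simp only [div_div_eq_mul_div, div_one]
    rcases lt_trichotomy y 0 with hy | hy | hy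
    · rw [Real.sign_of_neg hy, mul_neg_one]
      exact (tendsto_nhds_of_tendsto_nhdsWithin Real.tendsto_arctan_atBot).comp
        (hn.const_mul_atTop_of_neg hy)
    · simp [hy]
    · rw [Real.sign_of_pos hy, mul_one]
      exact (tendsto_nhds_of_tendsto_nhdsWithin Real.tendsto_arctan_atTop).comp
        (hn.const_mul_atTop hy)
  have hlim : ∀ b : ℝ, Tendsto (fun n : ℕ => ∫ x, g x * Real.arctan ((b - x) / (1 / ((n:ℝ) + 1))) ∂μ)
      atTop (𝓝 (∫ x, g x * (Real.pi / 2 * Real.sign (b - x)) ∂μ)) := by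
    intro b
    refine tendsto_integral_of_dominated_convergence (fun x => |g x| * (Real.pi / 2))
      (fun n => hm _ _) (hg.abs.mul_const _) (fun n => ae_of_all _ fun x => ?_)
      (ae_of_all _ fun x => (harc _).const_mul _)
    rw [norm_mul, Real.norm_eq_abs]
    gcongr
    exact habs _
  have hG : ∀ a b : ℝ, ∫ x, g x * Real.sign (a - x) ∂μ = ∫ x, g x * Real.sign (b - x) ∂μ := by
    intro a b
    have h1 := hlim a
    simp_rw [fun n : ℕ => hconst (1 / ((n:ℝ) + 1)) (by positivity) a b] at h1
    have h2 := tendsto_nhds_unique h1 (hlim b)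
    simp_rw [mul_left_comm _ (Real.pi / 2)] at h2
    rw [integral_const_mul, integral_const_mul] at h2
    exact mul_left_cancel₀ (by positivity) h2
  have hsm : Measurable Real.sign := by
    unfold Real.sign
    exact Measurable.ite measurableSet_Iio measurable_const
      (Measurable.ite measurableSet_Ioi measurable_const measurable_const)
  have hsign : ∀ y, ‖Real.sign y‖ ≤ 1 := by
    intro y
    rcases Real.sign_apply_eq y with h | h | h <;> simp [h]
  have hdom : ∀ (b : ℕ → ℝ) (s : ℝ → ℝ),
      (∀ x, Tendsto (fun n => Real.sign (b n - x)) atTop (𝓝 (s x))) →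
      ∫ x, g x * Real.sign (0 - x) ∂μ = ∫ x, g x * s x ∂μ := by
    intro b s hs
    have h1 : Tendsto (fun n : ℕ => ∫ x, g x * Real.sign (b n - x) ∂μ)
      atTop (𝓝 (∫ x, g x * s x ∂μ)) := by
      refine tendsto_integral_of_dominated_convergence (fun x => |g x|)
        (fun n => hg.aestronglyMeasurable.mul
          (hsm.comp (measurable_const.sub measurable_id)).aestronglyMeasurable)
        hg.abs (fun n => ae_of_all _ fun x => ?_)
        (ae_of_all _ fun x => (hs x).const_mul _)
      rw [norm_mul, Real.norm_eq_abs]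
      exact mul_le_of_le_one_right (abs_nonneg _) (hsign _)
    simp_rw [fun n => hG (b n) 0] at h1
    exact tendsto_nhds_unique tendsto_const_nhds h1
  have htop := hdom (fun n => n) (fun _ => 1) (fun x => by
    refine tendsto_const_nhds.congr' ?_
    filter_upwards [tendsto_natCast_atTop_atTop.eventually_gt_atTop x] with n hn
    rw [Real.sign_of_pos (by linarith)])
  have hbot := hdom (fun n => -n) (fun _ => -1) (fun x => by
    refine tendsto_const_nhds.congr' ?_
    filter_upwards [tendsto_natCast_atTop_atTop.eventually_gt_atTop (-x)] with n hn
    rw [Real.sign_of_neg (by linarith)])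
  have hIic : ∀ b, ∫ x, g x * (if x ≤ b then 1 else -1) ∂μ = ∫ x, g x * (-1) ∂μ := by
    intro b
    rw [← hbot]
    refine (hdom (fun n => b + 1 / ((n:ℝ) + 1)) _ (fun x => ?_)).symm
    refine tendsto_const_nhds.congr' ?_
    split_ifs with hx
    · refine Eventually.of_forall fun n => ?_
      have : 0 < 1 / ((n:ℝ) + 1) := by positivity
      show (1:ℝ) = Real.sign (b + 1 / ((n:ℝ) + 1) - x)
      rw [Real.sign_of_pos (by linarith)]
    · have h0 := tendsto_one_div_add_atTop_nhds_zero_nat (𝕜 := ℝ)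
      filter_upwards [h0.eventually_lt_const (show 0 < x - b by linarith)] with n hn
      rw [Real.sign_of_neg (by linarith)]
  have huniv : ∫ x, g x ∂μ = 0 := by
    rw [htop] at hbot
    rw [integral_mul_const, integral_mul_const] at hbot
    linarith
  have hIic' : ∀ b, ∫ x in Set.Iic b, g x ∂μ = 0 := by
    intro b
    have e : ∀ x, g x * (if x ≤ b then 1 else -1) = 2 * (Set.Iic b).indicator g x - g x := by
      intro x
      by_cases hx : x ≤ b
      · simp [hx]; ring
      · simp [hx]
    have h1 := hIic b
    simp_rw [e] at h1
    rw [integral_sub ((hg.indicator measurableSet_Iic).const_mul 2) hg, integral_const_mul,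
      integral_indicator measurableSet_Iic, integral_mul_const, huniv] at h1
    linarith
  induction B, hB using MeasurableSpace.induction_on_inter
    (borel_eq_generateFrom_Iic ℝ ▸ BorelSpace.measurable_eq (α := ℝ)) isPiSystem_Iic with
  | empty => simp
  | basic t ht =>
    obtain ⟨b, rfl⟩ := ht
    exact hIic' b
  | compl t ht ih =>
    have := integral_add_compl ht hg
    rw [ih, huniv] at this
    simpa using this
  | iUnion s hd hs ih =>
    rw [integral_iUnion hs hd hg.integrableOn]
    simp [ih]

/-- **Conjugation symmetry of Stieltjes transforms of complex measures.**
For a complex measure `f dμ` on `ℝ` with Stieltjes transform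
`m(z) = ∫ f(x)/(x − z) dμ(x)` (`z ∈ ℂ \ ℝ`), one has `conj (m z) = m (conj z)` for all
`z ∈ ℂ \ ℝ` iff the complex measure `f dμ` is real, i.e. `∫_B f dμ ∈ ℝ` for every Borel
set `B`. -/
theorem stieltjes_transform_conj_symm
    (μ : Measure ℝ) [IsFiniteMeasure μ] (f : ℝ → ℂ) (hf : Integrable f μ) :
    (∀ z : ℂ, z.im ≠ 0 →
        conj (∫ x, f x / ((x : ℂ) - z) ∂μ) = ∫ x, f x / ((x : ℂ) - conj z) ∂μ) ↔
      (∀ B : Set ℝ, MeasurableSet B → (∫ x in B, f x ∂μ).im = 0) := by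
  have him : Integrable (fun x => (f x).im) μ := hf.im
  have hset : ∀ B : Set ℝ, (∫ x in B, f x ∂μ).im = ∫ x in B, (f x).im ∂μ := by
    intro B
    exact (integral_im (𝕜 := ℂ) hf.integrableOn).symm
  constructor
  · intro h B hB
    rw [hset]
    exact aux_zero μ _ him (fun t ε hε => aux_kernel μ f hf h t ε hε) B hB
  · intro h z _
    have h0 : (fun x => (f x).im) =ᵐ[μ] 0 :=
      him.ae_eq_zero_of_forall_setIntegral_eq_zero (fun s hs _ => by rw [← hset, h s hs])
    rw [← integral_conj]
    refine integral_congr_ae ?_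
    filter_upwards [h0] with x hx
    have : conj (f x) = f x := Complex.conj_eq_iff_im.mpr hx
    simp [this]
end

section
/- Let z ∈ ℂ with Im z > 0 and set w = z², and let w^{1/4} denote the fourth root of w with arg(w^{1/4}) ∈ (0, π/2), so that (w^{1/4})² = z. Let M, M̃ ∈ M₂(ℂ) satisfy M₁₁ = 1 + w·M₀₀ and M̃₁₁ = 1 + w·M̃₀₀. Define R to be the matrix with entries [z·M₀₀, M₁₀; M₀₁, z·M₀₀] and R̃ analogously from M̃. Then the operator norms satisfy ‖R − R̃‖ = ‖D (M − M̃) D‖, where D = diag(w^{1/4}, w^{−1/4}). -/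
open Real Matrix

/-- **The key norm identity relating the Weyl matrix `M` at `w = z²` to the block Weyl
matrix `R` at `z`.** Let `Im z > 0`, `w = z²`, and let `ζ = w^{1/4}` be the fourth root of
`w` with `arg ζ ∈ (0, π/2)`, so `ζ² = z`. If `M₁₁ = 1 + w·M₀₀` and likewise for `M̃`, and
`R = [[z·M₀₀, M₁₀],[M₀₁, z·M₀₀]]`, `R̃` analogously, then
`‖R − R̃‖ = ‖D (M − M̃) D‖` for `D = diag(ζ, ζ⁻¹)`, in the operator norm. -/
theorem weyl_matrix_norm_identity
    (z : ℂ) (hz : 0 < z.im) (w : ℂ) (hw : w = z ^ 2)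
    (ζ : ℂ) (hζarg : ζ.arg ∈ Set.Ioo 0 (π / 2)) (hζ : ζ ^ 2 = z)
    (M M' : Matrix (Fin 2) (Fin 2) ℂ)
    (hM : M 1 1 = 1 + w * M 0 0) (hM' : M' 1 1 = 1 + w * M' 0 0)
    (R R' D : Matrix (Fin 2) (Fin 2) ℂ)
    (hR : R = !![z * M 0 0, M 1 0; M 0 1, z * M 0 0])
    (hR' : R' = !![z * M' 0 0, M' 1 0; M' 0 1, z * M' 0 0])
    (hD : D = !![ζ, 0; 0, ζ⁻¹]) :
    ‖toEuclideanCLM (𝕜 := ℂ) (R - R')‖ = ‖toEuclideanCLM (𝕜 := ℂ) (D * (M - M') * D)‖ := by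
  have hz0 : z ≠ 0 := by
    rintro rfl
    simp at hz
  have hζ0 : ζ ≠ 0 := by
    rintro rfl
    apply hz0
    rw [← hζ]
    simp
  obtain ⟨P, hP⟩ : ∃ P : Matrix (Fin 2) (Fin 2) ℂ, P = !![0, 1; 1, 0] := ⟨_, rfl⟩
  have hPs : star P = P := by
    rw [hP]
    ext i j
    fin_cases i <;> fin_cases j <;> simp [Matrix.star_apply]
  have hPP : P * P = 1 := by
    rw [hP]
    ext i j
    fin_cases i <;> fin_cases j <;> simp
  have hPu : P ∈ unitary (Matrix (Fin 2) (Fin 2) ℂ) := by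
    rw [Unitary.mem_iff, hPs]
    exact ⟨hPP, hPP⟩
  have hU : toEuclideanCLM (n := Fin 2) (𝕜 := ℂ) P ∈
      unitary (EuclideanSpace ℂ (Fin 2) →L[ℂ] EuclideanSpace ℂ (Fin 2)) :=
    Unitary.map_mem (toEuclideanCLM (n := Fin 2) (𝕜 := ℂ)) hPu
  have key : R - R' = P * (D * (M - M') * D) * P := by
    subst hR hR' hD hP hw hζ
    ext i j
    fin_cases i <;> fin_cases j <;>
      simp only [Matrix.mul_apply, Fin.sum_univ_two, Matrix.sub_apply] <;>
      simp [hM, hM'] <;> field_simp <;> try ring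
  rw [key, map_mul, map_mul, CStarRing.norm_mul_mem_unitary _ hU,
    CStarRing.norm_mem_unitary_mul _ hU]
end

section
/- Let T be a densely defined closed operator on a complex Hilbert space H, let z ∈ ℂ \ ℝ, and suppose R, S : H → H are continuous linear maps such that: R x ∈ D(T*T) and T*T(Rx) − z·Rx = x for all x ∈ H, R(T*Tu − zu) = u for all u ∈ D(T*T); and S x ∈ D(TT*) and TT*(Sx) − z·Sx = x for all x ∈ H, S(TT*v − zv) = v for all v ∈ D(TT*). Then for every ψ ∈ D(T), one has Rψ ∈ D(T) and T(Rψ) = S(Tψ). -/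
open scoped InnerProductSpace

/-- **Resolvent intertwining relation** `T·R_{T*T}(z) = R_{TT*}(z)·T` on `D(T)`
(Lemma 3.3): if `T` is a densely defined closed operator on a complex Hilbert space, `R`
is the resolvent of `T*T` at `z ∈ ℂ \ ℝ` and `S` the resolvent of `TT*` at `z`, then for
every `ψ ∈ D(T)` one has `Rψ ∈ D(T)` and `T(Rψ) = S(Tψ)`. -/
theorem resolvent_intertwining
    {E : Type*} [NormedAddCommGroup E] [InnerProductSpace ℂ E] [CompleteSpace E]
    (T : E →ₗ.[ℂ] E) (hdense : Dense (T.domain : Set E)) (hclosed : T.IsClosed)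
    (z : ℂ) (hz : z.im ≠ 0) (R S : E →L[ℂ] E)
    (hR1 : ∀ x : E, ∃ (h1 : R x ∈ T.domain) (h2 : T ⟨R x, h1⟩ ∈ T.adjoint.domain),
      T.adjoint ⟨T ⟨R x, h1⟩, h2⟩ - z • R x = x)
    (hR2 : ∀ (u : E) (h1 : u ∈ T.domain) (h2 : T ⟨u, h1⟩ ∈ T.adjoint.domain),
      R (T.adjoint ⟨T ⟨u, h1⟩, h2⟩ - z • u) = u)
    (hS1 : ∀ x : E, ∃ (h1 : S x ∈ T.adjoint.domain) (h2 : T.adjoint ⟨S x, h1⟩ ∈ T.domain),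
      T ⟨T.adjoint ⟨S x, h1⟩, h2⟩ - z • S x = x)
    (hS2 : ∀ (v : E) (h1 : v ∈ T.adjoint.domain) (h2 : T.adjoint ⟨v, h1⟩ ∈ T.domain),
      S (T ⟨T.adjoint ⟨v, h1⟩, h2⟩ - z • v) = v)
    (ψ : E) (hψ : ψ ∈ T.domain) :
    ∃ h1 : R ψ ∈ T.domain, T ⟨R ψ, h1⟩ = S (T ⟨ψ, hψ⟩) := by
  obtain ⟨h1, h2, h3⟩ := hR1 ψ
  refine ⟨h1, ?_⟩
  have h4 : T.adjoint ⟨T ⟨R ψ, h1⟩, h2⟩ = ψ + z • R ψ := sub_eq_iff_eq_add.mp h3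
  have h5 : T.adjoint ⟨T ⟨R ψ, h1⟩, h2⟩ ∈ T.domain := by
    rw [h4]
    exact T.domain.add_mem hψ (T.domain.smul_mem z h1)
  have h6 : T ⟨T.adjoint ⟨T ⟨R ψ, h1⟩, h2⟩, h5⟩ = T ⟨ψ, hψ⟩ + z • T ⟨R ψ, h1⟩ := by
    rw [← T.map_smul, ← T.map_add]
    congr 1
    exact Subtype.ext h4
  have h7 := hS2 _ h2 h5
  rw [h6, add_sub_cancel_right] at h7
  exact h7.symm
end
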